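/- Let L, and for each layer ℓ ∈ {1,…,L}, dimensions d_out(ℓ), d_in(ℓ), r(ℓ) be positive integers, and let A_ℓ ∈ ℝ^{d_in(ℓ)×r(ℓ)} have orthonormal columns (A_ℓᵀA_ℓ = I). Then for each layer ℓ there exists a constant c_ℓ > 0, depending only on the dimensions {d_out(i), d_in(i), r(i)}, such that for every Lip ≥ 0, every differentiable f on the product parameter space with Lip-Lipschitz gradient, every point W, and every μ > 0: ‖∇_{W_ℓ} f_{μ,A}(W)·A_ℓA_ℓᵀ − ∇_{W_ℓ} f(W)·A_ℓA_ℓᵀ‖_F ≤ c_ℓ · Lip · μ. -/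

import Mathlib

open MeasureTheory ProbabilityTheory Matrix

attribute [local instance] Matrix.frobeniusNormedAddCommGroup Matrix.frobeniusNormedSpace
attribute [-instance] instTopologicalSpaceMatrix Matrix.instUniformSpace

noncomputable section

/-- Entrywise expectation of a matrix-valued function. -/
def matExp {Ω : Type*} [MeasurableSpace Ω] (P : Measure Ω)
    {ι κ : Type*} (F : Ω → Matrix ι κ ℝ) : Matrix ι κ ℝ :=
  Matrix.of fun i j => ∫ ω, F ω i j ∂P

variable {L : ℕ} {dout din r : Fin L → ℕ}

/-- The block of the (Frobenius) gradient of `f` corresponding to layer `ℓ`: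
its `(i,j)` entry is the partial derivative of `f` in the direction of the
standard basis matrix `E_{ij}` of layer `ℓ`. -/
def gradBlock (f : ((ℓ : Fin L) → Matrix (Fin (dout ℓ)) (Fin (din ℓ)) ℝ) → ℝ)
    (W : (ℓ : Fin L) → Matrix (Fin (dout ℓ)) (Fin (din ℓ)) ℝ) (ℓ : Fin L) :
    Matrix (Fin (dout ℓ)) (Fin (din ℓ)) ℝ :=
  Matrix.of fun i j => fderiv ℝ f W (Pi.single ℓ (Matrix.single i j 1))

/-- The product of standard Gaussian measures over all entries of all blocks
`R_ℓ ∈ ℝ^{dout(ℓ) × r(ℓ)}` (i.i.d. standard Gaussian entries). -/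
def gaussBlocks (dout r : Fin L → ℕ) :
    Measure ((ℓ : Fin L) → Fin (dout ℓ) → Fin (r ℓ) → ℝ) :=
  Measure.pi fun _ => Measure.pi fun _ => Measure.pi fun _ => gaussianReal 0 1

/-- The AGZO perturbation `Δ(R) = (R₁A₁ᵀ, …, R_L A_Lᵀ)`. -/
def perturbA (A : (ℓ : Fin L) → Matrix (Fin (din ℓ)) (Fin (r ℓ)) ℝ)
    (R : (ℓ : Fin L) → Fin (dout ℓ) → Fin (r ℓ) → ℝ) :
    (ℓ : Fin L) → Matrix (Fin (dout ℓ)) (Fin (din ℓ)) ℝ :=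
  fun ℓ => Matrix.of (R ℓ) * (A ℓ)ᵀ

/-- The subspace-smoothed objective `f_{μ,A}(W) = E_R[f(W + μΔ(R))]`. -/
def smoothedA (f : ((ℓ : Fin L) → Matrix (Fin (dout ℓ)) (Fin (din ℓ)) ℝ) → ℝ)
    (μ : ℝ) (A : (ℓ : Fin L) → Matrix (Fin (din ℓ)) (Fin (r ℓ)) ℝ)
    (W : (ℓ : Fin L) → Matrix (Fin (dout ℓ)) (Fin (din ℓ)) ℝ) : ℝ :=
  ∫ R, f (W + μ • perturbA A R) ∂(gaussBlocks dout r)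


theorem frob_single {m n : ℕ} (i : Fin m) (j : Fin n) (a : ℝ) :
    ‖Matrix.single i j a‖ = |a| := by
  classical
  rw [Matrix.frobenius_norm_def]
  rw [Finset.sum_eq_single i, Finset.sum_eq_single j]
  · rw [← Real.sqrt_eq_rpow]
    simp [Real.sqrt_sq_eq_abs]
  · intro b _ hb
    simp [Matrix.single, hb.symm]
  · simp
  · intro b _ hb
    simp [Matrix.single, hb.symm]
  · simp

/-- General smoothing lemma. -/
theorem smooth_aux {E Ω : Type*} [NormedAddCommGroup E] [NormedSpace ℝ E]
    [MeasurableSpace Ω] (P : Measure Ω) [IsProbabilityMeasure P] (f : E → ℝ)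
    (hf : Differentiable ℝ f) (K : ℝ) (hK : 0 ≤ K)
    (hL : ∀ x y, ‖fderiv ℝ f x - fderiv ℝ f y‖ ≤ K * ‖x - y‖)
    (T : Ω → E) (hT : AEStronglyMeasurable T P) (N : Ω → ℝ) (hN : MemLp N 2 P)
    (hTN : ∀ ω, ‖T ω‖ ≤ N ω) (W : E) :
    ‖fderiv ℝ (fun x => ∫ ω, f (x + T ω) ∂P) W - fderiv ℝ f W‖ ≤ K * ∫ ω, N ω ∂P := by
  have hN1 : Integrable N P := hN.integrable (by norm_num)
  have hN2 : Integrable (fun ω => N ω ^ 2) P := hN.integrable_sq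
  have hcf' : Continuous (fderiv ℝ f) := by
    have : LipschitzWith K.toNNReal (fderiv ℝ f) := by
      apply LipschitzWith.of_dist_le_mul
      intro x y
      rw [dist_eq_norm, dist_eq_norm, Real.coe_toNNReal _ hK]
      exact hL x y
    exact this.continuous
  have hm : ∀ x, AEStronglyMeasurable (fun ω => f (x + T ω)) P := fun x =>
    hf.continuous.comp_aestronglyMeasurable (aestronglyMeasurable_const.add hT)
  have hm' : ∀ x, AEStronglyMeasurable (fun ω => fderiv ℝ f (x + T ω)) P := fun x =>
    hcf'.comp_aestronglyMeasurable (aestronglyMeasurable_const.add hT)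
  have hbd : ∀ x, ‖fderiv ℝ f x‖ ≤ ‖fderiv ℝ f W‖ + K * ‖x - W‖ := fun x => by
    have h1 := hL x W
    have h2 := norm_le_norm_add_norm_sub' (fderiv ℝ f x) (fderiv ℝ f W)
    linarith
  have hfi : Integrable (fun ω => f (W + T ω)) P := by
    refine Integrable.mono' (g := fun ω => ‖f W‖ + (‖fderiv ℝ f W‖ * N ω + K * N ω ^ 2)) ?_ (hm W) ?_
    · exact (integrable_const _).add ((hN1.const_mul _).add (hN2.const_mul _))
    · refine Filter.Eventually.of_forall fun ω => ?_
      have h0 := norm_nonneg (T ω)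
      have hb : ‖f (W + T ω) - f W‖ ≤ (‖fderiv ℝ f W‖ + K * ‖T ω‖) * ‖W + T ω - W‖ := by
        refine (convex_closedBall W ‖T ω‖).norm_image_sub_le_of_norm_fderiv_le (𝕜 := ℝ)
          (fun x _ => hf x) (fun x hx => ?_) (by simp) (by simp)
        refine (hbd x).trans ?_
        rw [mem_closedBall_iff_norm] at hx
        gcongr
      rw [add_sub_cancel_left] at hb
      have h2 := norm_le_norm_add_norm_sub' (f (W + T ω)) (f W)
      have h3 : (‖fderiv ℝ f W‖ + K * ‖T ω‖) * ‖T ω‖ ≤ (‖fderiv ℝ f W‖ + K * N ω) * N ω := by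
        have := hTN ω
        have := h0.trans this
        gcongr
      nlinarith
  have hder := hasFDerivAt_integral_of_dominated_of_fderiv_le (𝕜 := ℝ) (μ := P)
    (F := fun x ω => f (x + T ω)) (F' := fun x ω => fderiv ℝ f (x + T ω)) (x₀ := W)
    (s := Metric.ball W 1) (bound := fun ω => ‖fderiv ℝ f W‖ + K * (1 + N ω))
    (Metric.ball_mem_nhds W one_pos) (Filter.Eventually.of_forall hm) hfi (hm' W)
    (Filter.Eventually.of_forall fun ω x hx => by
      refine (hbd _).trans ?_
      rw [mem_ball_iff_norm] at hx
      have h1 : ‖x + T ω - W‖ ≤ ‖x - W‖ + ‖T ω‖ := by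
        rw [add_sub_right_comm]; exact norm_add_le _ _
      have := hTN ω
      gcongr
      linarith)
    ((integrable_const _).add (((integrable_const _).add hN1).const_mul _))
    (Filter.Eventually.of_forall fun ω x _ => by
      have := (hf (x + T ω)).hasFDerivAt.comp x ((hasFDerivAt_id x).add_const (T ω))
      simpa [Function.comp_def] using this)
  rw [hder.fderiv]
  have hi' : Integrable (fun ω => fderiv ℝ f (W + T ω)) P := by
    refine Integrable.mono' (g := fun ω => ‖fderiv ℝ f W‖ + K * N ω) ?_ (hm' W) ?_
    · exact (integrable_const _).add (hN1.const_mul _)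
    · refine Filter.Eventually.of_forall fun ω => (hbd _).trans ?_
      rw [add_sub_cancel_left]
      have := hTN ω
      gcongr
  have : ∫ ω, fderiv ℝ f (W + T ω) ∂P - fderiv ℝ f W
      = ∫ ω, (fderiv ℝ f (W + T ω) - fderiv ℝ f W) ∂P := by
    rw [integral_sub hi' (integrable_const _)]; simp
  rw [this, ← integral_const_mul]
  refine norm_integral_le_of_norm_le (hN1.const_mul _) (Filter.Eventually.of_forall fun ω => ?_)
  refine (hL _ _).trans ?_
  rw [add_sub_cancel_left]
  exact mul_le_mul_of_nonneg_left (hTN ω) hK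

theorem frob_le_sum {m n : ℕ} (M : Matrix (Fin m) (Fin n) ℝ) :
    ‖M‖ ≤ ∑ i, ∑ j, |M i j| := by
  conv_lhs => rw [Matrix.matrix_eq_sum_single M]
  refine (norm_sum_le _ _).trans (Finset.sum_le_sum fun i _ => ?_)
  refine (norm_sum_le _ _).trans (Finset.sum_le_sum fun j _ => ?_)
  rw [frob_single]

theorem frob_orth {m n : ℕ} (M : Matrix (Fin m) (Fin n) ℝ) (h : Mᵀ * M = 1) :
    ‖M‖ ≤ m * n := by
  refine (frob_le_sum M).trans ?_
  have : ∀ i j, |M i j| ≤ 1 := fun i j => by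
    have h1 : (Mᵀ * M) j j = 1 := by rw [h]; simp
    rw [Matrix.mul_apply] at h1
    have h2 : M i j * M i j ≤ ∑ k, Mᵀ j k * M k j :=
      Finset.single_le_sum (f := fun k => Mᵀ j k * M k j)
        (fun k _ => mul_self_nonneg (M k j)) (Finset.mem_univ i)
    rw [h1] at h2
    rw [abs_le_one_iff_mul_self_le_one]
    exact h2
  calc _ ≤ ∑ i : Fin m, ∑ j : Fin n, (1:ℝ) :=
        Finset.sum_le_sum fun i _ => Finset.sum_le_sum fun j _ => this i j
    _ = _ := by simp

/-- The sum of absolute values of all entries. -/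
def absSum (R : (ℓ : Fin L) → Fin (dout ℓ) → Fin (r ℓ) → ℝ) : ℝ :=
  ∑ ℓ, ∑ i, ∑ j, |R ℓ i j|

instance gaussBlocks_prob : IsProbabilityMeasure (gaussBlocks dout r) := by
  unfold gaussBlocks; infer_instance

theorem absSum_memLp : MemLp (absSum (dout := dout) (r := r)) 2 (gaussBlocks dout r) := by
  unfold absSum
  refine memLp_finsetSum _ fun ℓ _ => memLp_finsetSum _ fun i _ => memLp_finsetSum _ fun j _ => ?_
  have h1 : MeasurePreserving (fun R : (ℓ : Fin L) → Fin (dout ℓ) → Fin (r ℓ) → ℝ => R ℓ i j)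
      (gaussBlocks dout r) (gaussianReal 0 1) :=
    ((measurePreserving_eval (fun _ : Fin (r ℓ) => gaussianReal 0 1) j).comp
      (measurePreserving_eval (fun _ : Fin (dout ℓ) =>
        Measure.pi fun _ : Fin (r ℓ) => gaussianReal 0 1) i)).comp
      (measurePreserving_eval (fun ℓ : Fin L => Measure.pi fun _ : Fin (dout ℓ) =>
        Measure.pi fun _ : Fin (r ℓ) => gaussianReal 0 1) ℓ)
  exact ((memLp_id_gaussianReal 2).comp_measurePreserving h1).abs

theorem perturbA_cont (A : (ℓ : Fin L) → Matrix (Fin (din ℓ)) (Fin (r ℓ)) ℝ) :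
    Continuous (perturbA (dout := dout) A) := by
  let T : ((ℓ : Fin L) → Fin (dout ℓ) → Fin (r ℓ) → ℝ) →ₗ[ℝ]
      ((ℓ : Fin L) → Matrix (Fin (dout ℓ)) (Fin (din ℓ)) ℝ) :=
    { toFun := perturbA A
      map_add' := fun x y => by
        funext ℓ
        exact Matrix.add_mul (Matrix.of (x ℓ)) (Matrix.of (y ℓ)) _
      map_smul' := fun c x => by
        funext ℓ
        exact Matrix.smul_mul c (Matrix.of (x ℓ)) _ }
  exact T.continuous_of_finiteDimensional

theorem perturbA_bound (A : (ℓ : Fin L) → Matrix (Fin (din ℓ)) (Fin (r ℓ)) ℝ)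
    (hA : ∀ ℓ, (A ℓ)ᵀ * A ℓ = 1) (R : (ℓ : Fin L) → Fin (dout ℓ) → Fin (r ℓ) → ℝ) :
    ‖perturbA A R‖ ≤ (∑ ℓ, (din ℓ * r ℓ : ℝ)) * absSum R := by
  have hn : 0 ≤ absSum R := by unfold absSum; positivity
  refine (pi_norm_le_iff_of_nonneg (by positivity)).2 fun ℓ => ?_
  unfold perturbA
  refine (Matrix.frobenius_norm_mul _ _).trans ?_
  rw [Matrix.frobenius_norm_transpose, mul_comm]
  have h1 : (din ℓ * r ℓ : ℝ) ≤ ∑ ℓ, (din ℓ * r ℓ : ℝ) :=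
    Finset.single_le_sum (f := fun ℓ => (din ℓ * r ℓ : ℝ)) (fun _ _ => by positivity)
      (Finset.mem_univ ℓ)
  have h2 : ‖Matrix.of (R ℓ)‖ ≤ absSum R := (frob_le_sum _).trans
    (Finset.single_le_sum (f := fun ℓ => ∑ i, ∑ j, |R ℓ i j|) (fun _ _ => by positivity)
      (Finset.mem_univ ℓ))
  exact mul_le_mul ((frob_orth _ (hA ℓ)).trans h1) h2 (norm_nonneg _) (by positivity)

/-- for each layer `ℓ` there is a constant `c_ℓ > 0` depending only on the
dimensions such that for every orthonormal collection `A`, every `Lip ≥ 0`, every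
differentiable `f` with `Lip`-Lipschitz gradient, every `W` and every `μ > 0`,
`‖∇_{W_ℓ} f_{μ,A}(W)·A_ℓA_ℓᵀ − ∇_{W_ℓ} f(W)·A_ℓA_ℓᵀ‖_F ≤ c_ℓ·Lip·μ`. -/
theorem agzo_smoothing_bias
    (L : ℕ) (hL : 0 < L) (dout din r : Fin L → ℕ)
    (hdout : ∀ ℓ, 0 < dout ℓ) (hdin : ∀ ℓ, 0 < din ℓ) (hr : ∀ ℓ, 0 < r ℓ)
    (ℓ : Fin L) :
    ∃ c : ℝ, 0 < c ∧
      ∀ (A : (ℓ' : Fin L) → Matrix (Fin (din ℓ')) (Fin (r ℓ')) ℝ),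
        (∀ ℓ', (A ℓ')ᵀ * A ℓ' = 1) →
      ∀ (Lip : ℝ), 0 ≤ Lip →
      ∀ (f : ((ℓ' : Fin L) → Matrix (Fin (dout ℓ')) (Fin (din ℓ')) ℝ) → ℝ),
        Differentiable ℝ f →
        (∀ W W', ‖fderiv ℝ f W - fderiv ℝ f W'‖ ≤ Lip * ‖W - W'‖) →
      ∀ (W : (ℓ' : Fin L) → Matrix (Fin (dout ℓ')) (Fin (din ℓ')) ℝ),
      ∀ (μ : ℝ), 0 < μ →
        ‖gradBlock (smoothedA f μ A) W ℓ * (A ℓ * (A ℓ)ᵀ)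
          - gradBlock f W ℓ * (A ℓ * (A ℓ)ᵀ)‖ ≤ c * Lip * μ := by
  set C : ℝ := ∑ ℓ, (din ℓ * r ℓ : ℝ) with hC
  set M : ℝ := ∫ R, absSum R ∂(gaussBlocks dout r) with hM
  have hM0 : 0 ≤ M := integral_nonneg fun R => by
    show 0 ≤ absSum R
    unfold absSum; positivity
  have hC0 : 0 ≤ C := by positivity
  refine ⟨dout ℓ * din ℓ * (C * M) * ((din ℓ * r ℓ) * (din ℓ * r ℓ)) + 1, by positivity, ?_⟩
  intro A hA Lip hLip f hf hfL W μ hμ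
  have key : ‖fderiv ℝ (smoothedA f μ A) W - fderiv ℝ f W‖ ≤ Lip * (μ * C * M) := by
    have := smooth_aux (gaussBlocks dout r) f hf Lip hLip hfL (fun R => μ • perturbA A R)
      ((perturbA_cont A).const_smul μ).aestronglyMeasurable
      (fun R => (μ * C) * absSum R) (absSum_memLp.const_mul _)
      (fun R => by
        rw [norm_smul, Real.norm_of_nonneg hμ.le, mul_assoc]
        exact mul_le_mul_of_nonneg_left (perturbA_bound A hA R) hμ.le) W
    rw [integral_const_mul] at this
    exact this
  set D := gradBlock (smoothedA f μ A) W ℓ - gradBlock f W ℓ with hD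
  have hent : ∀ i j, |D i j| ≤ Lip * (μ * C * M) := fun i j => by
    have h1 : D i j = (fderiv ℝ (smoothedA f μ A) W - fderiv ℝ f W)
        (Pi.single ℓ (Matrix.single i j 1)) := rfl
    rw [h1, ← Real.norm_eq_abs]
    refine (ContinuousLinearMap.le_opNorm _ _).trans ?_
    rw [Pi.norm_single, frob_single, abs_one, mul_one]
    exact key
  have hDn : ‖D‖ ≤ dout ℓ * (din ℓ * (Lip * (μ * C * M))) := by
    refine (frob_le_sum D).trans ?_
    calc _ ≤ ∑ i : Fin (dout ℓ), ∑ j : Fin (din ℓ), (Lip * (μ * C * M)) :=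
          Finset.sum_le_sum fun i _ => Finset.sum_le_sum fun j _ => hent i j
      _ = _ := by simp
  rw [← Matrix.sub_mul, ← hD]
  have hAA : ‖A ℓ * (A ℓ)ᵀ‖ ≤ (din ℓ * r ℓ) * (din ℓ * r ℓ) := by
    refine (Matrix.frobenius_norm_mul _ _).trans ?_
    rw [Matrix.frobenius_norm_transpose]
    have := frob_orth _ (hA ℓ)
    gcongr
  calc _ ≤ ‖D‖ * ‖A ℓ * (A ℓ)ᵀ‖ := Matrix.frobenius_norm_mul _ _
    _ ≤ (dout ℓ * (din ℓ * (Lip * (μ * C * M)))) * ((din ℓ * r ℓ) * (din ℓ * r ℓ)) :=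
        mul_le_mul hDn hAA (norm_nonneg _) (by positivity)
    _ ≤ _ := by
        have : 0 ≤ Lip * μ := by positivity
        linarith


end
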